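/- Let n ≥ 1 and c = (c_1,...,c_{n+1}) be indeterminates. Then det_{1≤k,ℓ≤n}( e_{k-ℓ}(c) + (-1)^{ℓ-1} e_{k+ℓ}(c) ) = Σ_{α ∈ 𝒜, ℓ(α) ≤ n+1} s_α(c), where 𝒜 is the set of partitions whose Frobenius notation (a_1,...,a_r | b_1,...,b_r) satisfies b_i = a_i + 1 for all i, and s_α(c) is the Schur polynomial in the n+1 variables c. -/

import Mathlib

open Finset

/-- Complete homogeneous symmetric polynomial of degree `r` evaluated at `x`. -/
noncomputable def hpoly {σ : Type*} [Fintype σ] [DecidableEq σ] {R : Type*} [CommRing R]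
    (x : σ → R) (r : ℕ) : R :=
  ∑ d ∈ (Finset.univ : Finset (σ → Fin (r + 1))).filter (fun d => ∑ i, (d i : ℕ) = r),
    ∏ i, x i ^ ((d i : ℕ))

/-- `hpoly` with integer index, zero for negative degrees. -/
noncomputable def hpolyZ {σ : Type*} [Fintype σ] [DecidableEq σ] {R : Type*} [CommRing R]
    (x : σ → R) (k : ℤ) : R :=
  if 0 ≤ k then hpoly x k.toNat else 0

/-- A partition: weakly decreasing, eventually zero sequence of naturals (0-indexed parts,
so `parts 0` is the first part). -/
structure Partn where
  parts : ℕ → ℕ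
  antitone' : Antitone parts
  eventually_zero : ∃ N, ∀ i, N ≤ i → parts i = 0

/-- The conjugate partition: `conj p j` is the number of parts exceeding `j`
(the length of column `j+1`). -/
noncomputable def Partn.conj (p : Partn) (j : ℕ) : ℕ :=
  Nat.card {i : ℕ | j < p.parts i}

/-- Number of nonzero parts. -/
noncomputable def Partn.len (p : Partn) : ℕ :=
  Nat.card {i : ℕ | 0 < p.parts i}

/-- Membership in `𝒫₁ = 𝒞`: in Frobenius notation every arm length exceeds the
corresponding leg length by exactly 1 (armᵢ = partsᵢ - i - 1, legᵢ = conjᵢ - i - 1,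
0-indexed along the diagonal `i < parts i`). -/
def Partn.InC (p : Partn) : Prop :=
  ∀ i, i < p.parts i → p.parts i = p.conj i + 1

/-- Membership in `𝒫₋₁ = 𝒜` (conjugates of `𝒫₁`): every leg length exceeds the
corresponding arm length by exactly 1. -/
def Partn.InA (p : Partn) : Prop :=
  ∀ i, i < p.parts i → p.conj i = p.parts i + 1

/-- Schur polynomial in `n` variables via the Jacobi–Trudi determinant
`s_p = det(h_{p_i - i + j})_{1 ≤ i,j ≤ ℓ(p)}`; this vanishes when `ℓ(p) > n`. -/
noncomputable def schur {n : ℕ} {R : Type*} [CommRing R] (x : Fin n → R) (p : Partn) : R :=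
  Matrix.det (Matrix.of fun i j : Fin p.len =>
    hpolyZ x ((p.parts i : ℤ) - (i : ℕ) + (j : ℕ)))

/-- Skew Schur polynomial `s_{lam/mu}` in `n` variables via the Jacobi–Trudi determinant
`det(h_{lam_i - mu_j - i + j})`; this vanishes unless `mu ⊆ lam`. -/
noncomputable def skewSchur {n : ℕ} {R : Type*} [CommRing R] (x : Fin n → R)
    (lam mu : Partn) : R :=
  Matrix.det (Matrix.of fun i j : Fin (max lam.len mu.len) =>
    hpolyZ x ((lam.parts i : ℤ) - (mu.parts j : ℕ) - (i : ℕ) + (j : ℕ)))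

/-- Elementary symmetric polynomial of degree `r` evaluated at `x`. -/
noncomputable def epoly {σ : Type*} [Fintype σ] [DecidableEq σ] {R : Type*} [CommRing R]
    (x : σ → R) (r : ℕ) : R :=
  ∑ s ∈ Finset.univ.powersetCard r, ∏ i ∈ s, x i

/-- `epoly` with integer index, zero for negative degrees. -/
noncomputable def epolyZ {σ : Type*} [Fintype σ] [DecidableEq σ] {R : Type*} [CommRing R]
    (x : σ → R) (k : ℤ) : R :=
  if 0 ≤ k then epoly x k.toNat else 0

/-! The Toeplitz matrices `(e_{k-ℓ}(c))` and `(h_{k-ℓ}(-c))` are inverse to each other, and the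
relation `∑ e_{r-b}(c) h_b(-c) = 0` for `r > 0` continues this to the adjacent Hankel blocks. A
block elimination therefore turns the determinant in the elementary polynomials into the one of
size `n + 1` in the complete homogeneous polynomials whose `i`-th row is
`(h_{j-i} + (-1)ⁱ h_{j+i})_j`, with a single `h_j` for `i = 0`.

Expanding the latter by multilinearity amounts to choosing a sign for each of `1, …, n`. Up to
order, the sequences `(αᵢ - i)` with `0 ≤ i ≤ n` of the partitions `α ∈ 𝒜` with `ℓ(α) ≤ n + 1` are
exactly the sequences `(0, ±1, …, ±n)`, and the signs `(-1)ⁱ` are those of the sorting permutations,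
so the expansion is the sum of the Jacobi–Trudi determinants of these `α`. -/

namespace Partn

attribute [ext] Partn

theorem lt_conj_iff (p : Partn) (i j : ℕ) : i < p.conj j ↔ j < p.parts i := by
  classical
  obtain ⟨N, hN⟩ := p.eventually_zero
  have hex : ∃ m, ¬ j < p.parts m := ⟨N, by simp [hN N le_rfl]⟩
  have hset : {i : ℕ | j < p.parts i} = Set.Iio (Nat.find hex) := by
    ext a
    simp only [Set.mem_ofPred_eq, Set.mem_Iio, Nat.lt_find_iff, not_not]
    exact ⟨fun h m hm => h.trans_le (p.antitone' hm), fun h => h a le_rfl⟩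
  have hconj : p.conj j = Nat.find hex := by simp [conj, hset]
  rw [hconj, ← Set.mem_Iio, ← hset, Set.mem_ofPred_eq]

theorem lt_len_iff (p : Partn) (i : ℕ) : i < p.len ↔ 0 < p.parts i :=
  p.lt_conj_iff i 0

theorem parts_eq_zero_iff (p : Partn) (i : ℕ) : p.parts i = 0 ↔ p.len ≤ i := by
  have := p.lt_len_iff i
  omega

theorem InA.parts_zero_le {p : Partn} (h : p.InA) {n : ℕ} (hlen : p.len ≤ n + 1) :
    p.parts 0 ≤ n := by
  by_contra! hlt
  have : p.len = p.parts 0 + 1 := h 0 (by omega)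
  omega

/-- The empty partition. -/
def empty : Partn where
  parts _ := 0
  antitone' := antitone_const
  eventually_zero := ⟨0, fun _ _ => rfl⟩

theorem parts_zero_eq_zero_iff (p : Partn) : p.parts 0 = 0 ↔ p = empty := by
  refine ⟨fun h => Partn.ext (funext fun i => ?_), fun h => h ▸ rfl⟩
  exact Nat.eq_zero_of_le_zero (h ▸ p.antitone' i.zero_le)

/-- The partition obtained by wrapping a hook with arm `a` and leg `b` around `p`, so that
`(a | b)` is put in front of the Frobenius notation. Parts of `p` that do not fit under the hook
are cut off, so this has the intended meaning for `p.parts 0 ≤ a` and `p.len ≤ b`. -/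
def addHook (a b : ℕ) (p : Partn) : Partn where
  parts
    | 0 => a + 1
    | i + 1 => if i < b then min a (p.parts i) + 1 else 0
  antitone' := antitone_nat_of_succ_le fun i => by
    rcases i with _ | i
    · dsimp only
      split_ifs <;> omega
    · have := p.antitone' (Nat.le_add_right i 1)
      dsimp only
      split_ifs <;> omega
  eventually_zero := ⟨b + 1, fun
    | 0, h => by omega
    | i + 1, h => if_neg (by omega)⟩

/-- The partition obtained by removing the first row and the first column, so that the first
column is dropped from the Frobenius notation. -/
def removeHook (p : Partn) : Partn where
  parts i := p.parts (i + 1) - 1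
  antitone' _ _ hij := Nat.sub_le_sub_right (p.antitone' (Nat.succ_le_succ hij)) 1
  eventually_zero := by
    obtain ⟨N, hN⟩ := p.eventually_zero
    exact ⟨N, fun i hi => by rw [hN (i + 1) (by omega)]⟩

theorem parts_addHook_zero (a b : ℕ) (p : Partn) : (addHook a b p).parts 0 = a + 1 := rfl

theorem parts_addHook_succ (a b : ℕ) (p : Partn) (i : ℕ) :
    (addHook a b p).parts (i + 1) = if i < b then min a (p.parts i) + 1 else 0 := rfl

theorem parts_removeHook (p : Partn) (i : ℕ) : p.removeHook.parts i = p.parts (i + 1) - 1 := rfl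

theorem len_addHook (a b : ℕ) (p : Partn) : (addHook a b p).len = b + 1 := by
  refine eq_of_forall_lt_iff fun i => ?_
  rw [lt_len_iff]
  rcases i with _ | i
  · simp only [parts_addHook_zero, Nat.succ_pos]
  · rw [parts_addHook_succ]
    split_ifs <;> omega

theorem conj_removeHook (p : Partn) (j : ℕ) : p.removeHook.conj j = p.conj (j + 1) - 1 := by
  refine eq_of_forall_lt_iff fun i => ?_
  have := p.lt_conj_iff (i + 1) (j + 1)
  rw [lt_conj_iff, parts_removeHook]
  omega

theorem len_removeHook_le (p : Partn) : p.removeHook.len ≤ p.len - 1 := by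
  rw [← parts_eq_zero_iff, parts_removeHook]
  have := p.parts_eq_zero_iff (p.len - 1 + 1)
  omega

theorem removeHook_addHook {a b : ℕ} {p : Partn} (ha : p.parts 0 ≤ a) (hb : p.len ≤ b) :
    (addHook a b p).removeHook = p := by
  ext i
  have hle := p.antitone' i.zero_le
  have hzero := p.parts_eq_zero_iff i
  rw [parts_removeHook, parts_addHook_succ]
  split_ifs <;> omega

theorem addHook_removeHook {a b : ℕ} {p : Partn} (ha : p.parts 0 = a + 1) (hb : p.len = b + 1) :
    addHook a b p.removeHook = p := by
  ext i
  rcases i with _ | i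
  · exact ha.symm
  · have hle := p.antitone' (i + 1).zero_le
    have hpos := p.lt_len_iff (i + 1)
    rw [parts_addHook_succ, parts_removeHook]
    split_ifs <;> omega

theorem inA_iff_removeHook {p : Partn} (h : 0 < p.parts 0) :
    p.InA ↔ p.len = p.parts 0 + 1 ∧ p.removeHook.InA := by
  refine ⟨fun hA => ⟨hA 0 h, fun i hi => ?_⟩, fun ⟨hlen, hA⟩ i hi => ?_⟩
  · rw [parts_removeHook] at hi
    have := hA (i + 1) (by omega)
    rw [conj_removeHook, parts_removeHook]
    omega
  · rcases i with _ | i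
    · exact hlen
    · have := hA i (by rw [parts_removeHook]; omega)
      rw [conj_removeHook, parts_removeHook] at this
      omega

open Classical in
/-- The partitions in `𝒜` of length at most `n + 1`. In Frobenius notation they are the
`(a₁, …, aᵣ | a₁ + 1, …, aᵣ + 1)` with `a₁ < n`, and the recursion distinguishes whether the
largest allowed column `(n | n + 1)` occurs. -/
noncomputable def finsetA : ℕ → Finset Partn
  | 0 => {empty}
  | n + 1 => finsetA n ∪ (finsetA n).image (addHook n (n + 1))

theorem addHook_inA {n : ℕ} {p : Partn} (hA : p.InA) (hlen : p.len ≤ n + 1) :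
    (addHook n (n + 1) p).InA := by
  rw [inA_iff_removeHook (Nat.succ_pos n), removeHook_addHook (hA.parts_zero_le hlen) hlen]
  exact ⟨len_addHook n (n + 1) p, hA⟩

theorem InA.eq_addHook_removeHook {n : ℕ} {p : Partn} (hA : p.InA) (hlen : p.len = n + 2) :
    p.removeHook.InA ∧ p.removeHook.len ≤ n + 1 ∧ addHook n (n + 1) p.removeHook = p := by
  have hpos : 0 < p.parts 0 := (p.lt_len_iff 0).1 (by omega)
  obtain ⟨hhook, hrem⟩ := (inA_iff_removeHook hpos).1 hA
  exact ⟨hrem, by have := p.len_removeHook_le; omega, addHook_removeHook (by omega) hlen⟩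

theorem mem_finsetA {n : ℕ} {p : Partn} : p ∈ finsetA n ↔ p.InA ∧ p.len ≤ n + 1 := by
  induction n generalizing p with
  | zero =>
    rw [finsetA, mem_singleton, ← parts_zero_eq_zero_iff]
    refine ⟨fun h => ⟨fun i hi => ?_, ?_⟩, fun ⟨hA, hlen⟩ => ?_⟩
    · have := p.antitone' i.zero_le
      omega
    · have := (p.parts_eq_zero_iff 0).1 h
      omega
    · exact Nat.eq_zero_of_le_zero (hA.parts_zero_le hlen)
  | succ n ih =>
    simp only [finsetA, mem_union, mem_image, ih]
    constructor
    · rintro (⟨hA, hlen⟩ | ⟨q, ⟨hA, hlen⟩, rfl⟩)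
      · exact ⟨hA, by omega⟩
      · exact ⟨addHook_inA hA hlen, (len_addHook n (n + 1) q).le⟩
    · rintro ⟨hA, hlen⟩
      rcases hlen.eq_or_lt with hlen | hlen
      · obtain ⟨hrem, hremlen, hp⟩ := hA.eq_addHook_removeHook hlen
        exact Or.inr ⟨_, ⟨hrem, hremlen⟩, hp⟩
      · exact Or.inl ⟨hA, by omega⟩

theorem sum_finsetA_succ {M : Type*} [AddCommMonoid M] (n : ℕ) (f : Partn → M) :
    ∑ p ∈ finsetA (n + 1), f p =
      ∑ p ∈ finsetA n, f p + ∑ p ∈ finsetA n, f (addHook n (n + 1) p) := by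
  classical
  have hdisj : Disjoint (finsetA n) ((finsetA n).image (addHook n (n + 1))) := by
    rw [disjoint_right]
    intro _ himage hmem
    obtain ⟨q, -, rfl⟩ := mem_image.1 himage
    have := (mem_finsetA.1 hmem).2
    rw [len_addHook] at this
    omega
  have hinj : Set.InjOn (addHook n (n + 1)) (finsetA n) := by
    refine Set.LeftInvOn.injOn (f₁' := removeHook) fun p hp => ?_
    obtain ⟨hA, hlen⟩ := mem_finsetA.1 hp
    exact removeHook_addHook (hA.parts_zero_le hlen) hlen
  rw [← sum_image hinj, ← sum_union hdisj, finsetA]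

end Partn

section Alternating

/-- The vector `f (-i) + (-1)ⁱ f i` obtained by folding a two-sided sequence `f` at `0`; the term
`f 0`, which the fold would double, is taken once. -/
def foldedVec {V : Type*} [AddCommGroup V] (f : ℤ → V) (i : ℕ) : V :=
  if i = 0 then f 0 else f (-i) + (-1 : ℤ) ^ i • f i

variable {R V M : Type*} [CommSemiring R] [AddCommGroup V] [AddCommGroup M] [Module R V]
  [Module R M]

theorem alternatingMap_snoc {n : ℕ} (g : V [⋀^Fin (n + 1)]→ₗ[R] M) (r : Fin n → V) (v : V) :
    g (Fin.snoc (α := fun _ => V) r v) = (-1 : ℤ) ^ n • g (Fin.cons v r) := by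
  have hperm := g.map_perm (Fin.cons v r) (finRotate (n + 1))
  rw [sign_finRotate, Nat.add_sub_cancel] at hperm
  rw [Fin.snoc_eq_cons_rotate, ← Function.comp_def, hperm, Units.smul_def]
  push_cast
  rfl

theorem alternatingMap_snoc_add_smul {n : ℕ} (g : V [⋀^Fin (n + 1)]→ₗ[R] M) (r : Fin n → V)
    (v w : V) :
    g (Fin.snoc (α := fun _ => V) r (v + (-1 : ℤ) ^ n • w)) =
      g (Fin.snoc (α := fun _ => V) r v) + g (Fin.cons w r) := by
  have hcurry (u : V) : g (Fin.cons u r) = g.curryLeft u r := rfl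
  have hsq : (-1 : ℤ) ^ n * (-1) ^ n = 1 := by rw [← mul_pow]; simp
  simp only [alternatingMap_snoc, hcurry, map_add, map_zsmul, AlternatingMap.add_apply,
    AlternatingMap.smul_apply, smul_add, smul_smul, hsq, one_smul]

-- Expanding the last vector, the term `f (-n)` stays in place and leaves `α` unchanged, while the
-- cyclic shift moving `f n` to the front absorbs its sign and wraps the hook `(n - 1 | n)`.
theorem alternatingMap_foldedVec (f : ℤ → V) {n : ℕ} (g : V [⋀^Fin (n + 1)]→ₗ[R] M) :
    g (fun i => foldedVec f i) = ∑ α ∈ Partn.finsetA n, g (fun i => f ((α.parts i : ℤ) - i)) := by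
  induction n with
  | zero =>
    rw [Partn.finsetA, sum_singleton]
    congr 1
    ext i
    simp [foldedVec, Partn.empty]
  | succ n ih =>
    have hcons (v : V) : g (Fin.cons v fun i : Fin (n + 1) => foldedVec f i) =
        ∑ α ∈ Partn.finsetA n, g (Fin.cons v fun i => f ((α.parts i : ℤ) - i)) :=
      ih (g.curryLeft v)
    have hsplit : (fun i : Fin (n + 2) => foldedVec f i) =
        Fin.snoc (α := fun _ => V) (fun i : Fin (n + 1) => foldedVec f i)
          (f (-(n + 1 : ℕ)) + (-1 : ℤ) ^ (n + 1) • f (n + 1 : ℕ)) :=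
      (Fin.snoc_init_self (α := fun _ => V) fun i : Fin (n + 2) => foldedVec f i).symm
    rw [hsplit, alternatingMap_snoc_add_smul, alternatingMap_snoc, hcons, hcons, smul_sum,
      Partn.sum_finsetA_succ]
    congr 1 <;> refine sum_congr rfl fun α hα => ?_ <;>
      obtain ⟨hA, hlen⟩ := Partn.mem_finsetA.1 hα
    · rw [← alternatingMap_snoc]
      congr 1
      ext i
      cases i using Fin.lastCases with
      | last => simp [(α.parts_eq_zero_iff (n + 1)).2 hlen]
      | cast i => simp
    · congr 1
      ext i
      cases i using Fin.cases with
      | zero => simp [Partn.parts_addHook_zero]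
      | succ i =>
        have hfit : α.parts i ≤ n := (α.antitone' (Nat.zero_le i)).trans (hA.parts_zero_le hlen)
        simp [Partn.parts_addHook_succ, hfit, Nat.le_of_lt_succ i.is_lt]

end Alternating

section SymmetricPolynomials

variable {σ R : Type*} [Fintype σ] [DecidableEq σ] [CommRing R] (x : σ → R)

theorem epolyZ_zero : epolyZ x 0 = 1 := by
  simp [epolyZ, epoly]

theorem hpolyZ_zero : hpolyZ x 0 = 1 := by
  rw [hpolyZ, if_pos le_rfl, Int.toNat_zero, hpoly, filter_true_of_mem fun d _ => by simp]
  simp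

theorem epolyZ_natCast (r : ℕ) : epolyZ x r = epoly x r := by
  simp [epolyZ]

theorem epolyZ_of_neg {k : ℤ} (hk : k < 0) : epolyZ x k = 0 :=
  if_neg hk.not_ge

theorem hpolyZ_natCast (r : ℕ) : hpolyZ x r = hpoly x r := by
  simp [hpolyZ]

theorem hpolyZ_of_neg {k : ℤ} (hk : k < 0) : hpolyZ x k = 0 :=
  if_neg hk.not_ge

theorem hpoly_neg (r : ℕ) : hpoly (-x) r = (-1) ^ r * hpoly x r := by
  rw [hpoly, hpoly, mul_sum]
  refine sum_congr rfl fun d hd => ?_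
  simp only [Pi.neg_apply, neg_pow (x _), prod_mul_distrib, prod_pow_eq_pow_sum,
    (mem_filter.1 hd).2]

theorem hpolyZ_neg {k : ℤ} {m : ℕ} (h : Even (k - m)) :
    hpolyZ (-x) k = (-1) ^ m * hpolyZ x k := by
  rcases lt_or_ge k 0 with hk | hk
  · simp [hpolyZ_of_neg _ hk]
  · lift k to ℕ using hk
    have hparity : Even k ↔ Even m := by
      rwa [Int.even_sub, Int.even_coe_nat, Int.even_coe_nat] at h
    rw [hpolyZ_natCast, hpolyZ_natCast, hpoly_neg, neg_one_pow_congr hparity]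

theorem mk_epoly : PowerSeries.mk (epoly x) = ∏ i, (1 + PowerSeries.C (x i) * PowerSeries.X) := by
  ext r
  simp only [prod_one_add, map_sum, prod_mul_distrib, prod_const, ← map_prod,
    PowerSeries.coeff_C_mul_X_pow, PowerSeries.coeff_mk, epoly, ← sum_filter]
  refine sum_congr ?_ fun _ _ => rfl
  ext t
  simp [mem_powersetCard, eq_comm]

theorem mk_hpoly : PowerSeries.mk (hpoly x) = ∏ i, PowerSeries.mk (fun r => x i ^ r) := by
  ext r
  have hlt {l : σ →₀ ℕ} (hl : l ∈ finsuppAntidiag univ r) (i : σ) : l i < r + 1 := by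
    rw [Nat.lt_succ_iff, ← (mem_finsuppAntidiag.1 hl).1]
    exact single_le_sum_of_canonicallyOrdered (mem_univ i)
  rw [PowerSeries.coeff_prod, PowerSeries.coeff_mk, hpoly]
  refine sum_bij' (fun d _ => Finsupp.equivFunOnFinite.symm fun i => (d i : ℕ))
    (fun l hl i => ⟨l i, hlt hl i⟩) ?_ ?_ ?_ ?_ ?_
  · simp [mem_finsuppAntidiag]
  · simp [mem_finsuppAntidiag]
  · simp
  · intro l _
    ext i
    rfl
  · simp

theorem mk_epoly_mul_mk_hpoly_neg :
    PowerSeries.mk (epoly x) * PowerSeries.mk (hpoly (-x)) = 1 := by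
  rw [mk_epoly, mk_hpoly, ← prod_mul_distrib]
  refine prod_eq_one fun i _ => ?_
  ext r
  rcases r with _ | r
  · simp
  · rw [add_mul, one_mul, mul_assoc, map_add, PowerSeries.coeff_C_mul,
      PowerSeries.coeff_succ_X_mul]
    simp [pow_succ', PowerSeries.coeff_one]

theorem sum_range_epolyZ_mul_hpoly_neg {r N : ℕ} (hr : r ≠ 0) (hN : r < N) :
    ∑ b ∈ range N, epolyZ x ((r : ℤ) - b) * hpoly (-x) b = 0 := by
  have hcoeff := congrArg (PowerSeries.coeff r) (mk_epoly_mul_mk_hpoly_neg x)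
  rw [mul_comm, PowerSeries.coeff_mul, Nat.sum_antidiagonal_eq_sum_range_succ_mk,
    PowerSeries.coeff_one, if_neg hr] at hcoeff
  rw [← hcoeff, ← sum_subset (range_subset_range.2 hN)]
  · refine sum_congr rfl fun b hb => ?_
    rw [PowerSeries.coeff_mk, PowerSeries.coeff_mk, mul_comm,
      ← Nat.cast_sub (mem_range_succ_iff.1 hb), epolyZ_natCast]
  · intro b _ hb
    rw [epolyZ_of_neg x (by rw [mem_range] at hb; omega), zero_mul]

end SymmetricPolynomials

section Determinants

variable {R : Type*} [CommRing R]

theorem det_sub_mul_mul_det_of_mul_add_mul_eq_zero {m n : Type*} [Fintype m] [Fintype n]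
    [DecidableEq m] [DecidableEq n] {A : Matrix m m R} {B C : Matrix m n R} {D : Matrix n n R}
    (h : A * B + C * D = 0) (P : Matrix n m R) :
    (A - C * P).det * D.det = A.det * (D + P * B).det := by
  have hblock : Matrix.fromBlocks A C 0 1 * Matrix.fromBlocks 1 B (-P) D =
      Matrix.fromBlocks (A - C * P) 0 (-P) D := by
    simp [Matrix.fromBlocks_multiply, h, sub_eq_add_neg]
  simpa using (congrArg Matrix.det hblock).symm

theorem det_neg_one_pow_mul {N : ℕ} (A : Matrix (Fin N) (Fin N) R) :
    (Matrix.of fun i j : Fin N => (-1) ^ ((i : ℕ) + j) * A i j).det = A.det := by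
  have hsq : (∏ i : Fin N, (-1 : R) ^ (i : ℕ)) * ∏ i : Fin N, (-1 : R) ^ (i : ℕ) = 1 := by
    simp [← prod_mul_distrib, ← mul_pow]
  calc
    _ = (∏ i : Fin N, (-1 : R) ^ (i : ℕ)) *
          (Matrix.of fun i j : Fin N => (-1) ^ (j : ℕ) * A i j).det := by
      rw [← Matrix.det_mul_column]
      simp only [pow_add, mul_assoc, Matrix.of_apply]
    _ = A.det := by rw [Matrix.det_mul_row, ← mul_assoc, hsq, one_mul]

/-- The Toeplitz matrix with `(i, j)` entry `a (i - j)`. -/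
def toeplitz (a : ℤ → R) (n : ℕ) : Matrix (Fin n) (Fin n) R :=
  Matrix.of fun i j => a ((i : ℤ) - j)

/-- The Hankel matrix with `(i, j)` entry `a (i + j + 1)` for `i` and `j` counted from `0`. -/
def hankel (a : ℕ → R) (m n : ℕ) : Matrix (Fin m) (Fin n) R :=
  Matrix.of fun i j => a (i + j + 1)

theorem det_toeplitz_eq_one {a : ℤ → R} (hneg : ∀ k < 0, a k = 0) (hzero : a 0 = 1) (n : ℕ) :
    (toeplitz a n).det = 1 := by
  rw [Matrix.det_of_isLowerTriangular]
  · simp [toeplitz, hzero]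
  · intro i j hij
    have : (i : ℕ) < j := hij
    exact hneg _ (by omega)

/-- The matrix of the map sending the `l`-th basis vector to `(-1) ^ (l + 1)` times the
`(l + 1)`-st one, for `l` counted from `0`. -/
def signedShift (R : Type*) [CommRing R] (n : ℕ) : Matrix (Fin (n + 1)) (Fin n) R :=
  Matrix.of fun i l => if i = l.succ then (-1) ^ ((l : ℕ) + 1) else 0

theorem mul_signedShift_apply {ι : Type*} {n : ℕ} (B : Matrix ι (Fin (n + 1)) R) (k : ι)
    (l : Fin n) : (B * signedShift R n) k l = B k l.succ * (-1) ^ ((l : ℕ) + 1) := by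
  simp [signedShift, Matrix.mul_apply]

theorem signedShift_mul_apply_zero {ι : Type*} {n : ℕ} (B : Matrix (Fin n) ι R) (j : ι) :
    (signedShift R n * B) 0 j = 0 := by
  simp [signedShift, Matrix.mul_apply, (Fin.succ_ne_zero _).symm]

theorem signedShift_mul_apply_succ {ι : Type*} {n : ℕ} (B : Matrix (Fin n) ι R) (i : Fin n)
    (j : ι) : (signedShift R n * B) i.succ j = (-1) ^ ((i : ℕ) + 1) * B i j := by
  simp [signedShift, Matrix.mul_apply]

end Determinants

section JacobiTrudi

variable {σ R : Type*} [Fintype σ] [DecidableEq σ] [CommRing R] (x : σ → R)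

theorem toeplitz_mul_hankel_add_hankel_mul_toeplitz (m n : ℕ) :
    toeplitz (epolyZ x) m * hankel (hpoly (-x)) m n +
      hankel (epoly x) m n * (toeplitz (hpolyZ (-x)) n).transpose = 0 := by
  ext k j
  have hreflect : ∑ b ∈ range (j + 1), epolyZ x ((k + j + 1 : ℕ) - b) * hpoly (-x) b =
      ∑ i ∈ range n, epoly x (k + i + 1) * hpolyZ (-x) ((j : ℤ) - i) := by
    rw [← sum_range_reflect, ← sum_subset (range_subset_range.2 (Nat.succ_le_of_lt j.is_lt))]
    · refine sum_congr rfl fun i hi => ?_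
      have hij : i ≤ j := mem_range_succ_iff.1 hi
      rw [Nat.add_sub_cancel, ← Nat.cast_sub hij, ← Nat.cast_sub (by omega), epolyZ_natCast,
        hpolyZ_natCast]
      congr 2
      omega
    · intro i _ hi
      rw [hpolyZ_of_neg (-x) (by rw [mem_range] at hi; omega), mul_zero]
  simp only [Matrix.add_apply, Matrix.mul_apply, Matrix.zero_apply, toeplitz, hankel,
    Matrix.of_apply, Matrix.transpose_apply]
  rw [← sum_range_epolyZ_mul_hpoly_neg x (r := k + j + 1) (N := j + 1 + m)
    (by omega) (by omega), sum_range_add, hreflect, sum_range, sum_range, add_comm]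
  congr 1
  refine sum_congr rfl fun l _ => ?_
  congr 2
  · push_cast
    ring
  · ring

/-- The `n` consecutive values `h_z(x), h_{z+1}(x), …` forming a row of a Jacobi–Trudi matrix. -/
noncomputable def hpolyRow (n : ℕ) (z : ℤ) : Fin n → R :=
  fun j => hpolyZ x (z + j)

theorem det_foldedVec_hpolyRow_neg (n : ℕ) :
    (Matrix.of fun i : Fin n => foldedVec (hpolyRow (-x) n) i).det =
      (Matrix.of fun i : Fin n => foldedVec (hpolyRow x n) i).det := by
  rw [← det_neg_one_pow_mul (Matrix.of fun i : Fin n => foldedVec (hpolyRow x n) i)]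
  refine congrArg Matrix.det (Matrix.ext fun i j => ?_)
  have hminus : Even (-(i : ℤ) + j - ((i + j : ℕ) : ℤ)) := ⟨-i, by push_cast; ring⟩
  have hplus : Even ((i : ℤ) + j - ((i + j : ℕ) : ℤ)) := ⟨0, by push_cast; ring⟩
  simp only [Matrix.of_apply, foldedVec]
  split_ifs with hi
  · rw [hi, Nat.cast_zero] at hplus
    simp only [hpolyRow, hi, hpolyZ_neg x hplus]
  · simp only [Pi.add_apply, Pi.smul_apply, hpolyRow, hpolyZ_neg x hminus, hpolyZ_neg x hplus,
      mul_add, mul_smul_comm]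

theorem toeplitz_sub_hankel_mul_signedShift (n : ℕ) :
    toeplitz (epolyZ x) n - hankel (epoly x) n (n + 1) * signedShift R n =
      Matrix.of fun k l : Fin n =>
        epolyZ x ((k : ℤ) - (l : ℕ)) + (-1 : R) ^ (l : ℕ) * epoly x ((k : ℕ) + (l : ℕ) + 2) := by
  ext k l
  have hindex : (k : ℕ) + (l + 1) + 1 = k + l + 2 := by ring
  simp only [Matrix.sub_apply, mul_signedShift_apply, toeplitz, hankel, Matrix.of_apply,
    Fin.val_succ, hindex]
  ring

theorem toeplitz_add_signedShift_mul_hankel (n : ℕ) :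
    (toeplitz (hpolyZ x) (n + 1)).transpose + signedShift R n * hankel (hpoly x) n (n + 1) =
      Matrix.of fun i : Fin (n + 1) => foldedVec (hpolyRow x (n + 1)) i := by
  refine Matrix.ext fun i j => ?_
  rw [Matrix.add_apply]
  cases i using Fin.cases with
  | zero =>
    rw [signedShift_mul_apply_zero]
    simp [toeplitz, foldedVec, hpolyRow]
  | succ i =>
    have hindex : ((i + 1 : ℕ) : ℤ) + j = (i + j + 1 : ℕ) := by push_cast; ring
    rw [signedShift_mul_apply_succ]
    simp only [toeplitz, hankel, foldedVec, hpolyRow, Matrix.transpose_apply, Matrix.of_apply,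
      Fin.val_succ, Nat.add_one_ne_zero, if_false, Pi.add_apply, Pi.smul_apply, hindex,
      hpolyZ_natCast, neg_add_eq_sub]
    simp only [zsmul_eq_mul, Int.cast_pow, Int.cast_neg, Int.cast_one]

theorem det_epoly_eq_det_foldedVec (n : ℕ) :
    (Matrix.of fun k l : Fin n =>
        epolyZ x ((k : ℤ) - (l : ℕ)) + (-1 : R) ^ (l : ℕ) * epoly x ((k : ℕ) + (l : ℕ) + 2)).det =
      (Matrix.of fun i : Fin (n + 1) => foldedVec (hpolyRow x (n + 1)) i).det := by
  have hE : (toeplitz (epolyZ x) n).det = 1 :=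
    det_toeplitz_eq_one (fun _ => epolyZ_of_neg x) (epolyZ_zero x) n
  have hH : (toeplitz (hpolyZ (-x)) (n + 1)).transpose.det = 1 := by
    rw [Matrix.det_transpose]
    exact det_toeplitz_eq_one (fun _ => hpolyZ_of_neg (-x)) (hpolyZ_zero (-x)) (n + 1)
  have hdual := det_sub_mul_mul_det_of_mul_add_mul_eq_zero
    (toeplitz_mul_hankel_add_hankel_mul_toeplitz x n (n + 1)) (signedShift R n)
  rwa [hE, hH, mul_one, one_mul, toeplitz_sub_hankel_mul_signedShift,
    toeplitz_add_signedShift_mul_hankel, det_foldedVec_hpolyRow_neg] at hdual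

theorem det_hpolyRow_eq_schur {m : ℕ} (c : Fin m → R) (p : Partn) {N : ℕ} (h : p.len ≤ N) :
    (Matrix.of fun i : Fin N => hpolyRow c N ((p.parts i : ℤ) - i)).det = schur c p := by
  induction N, h using Nat.le_induction with
  | base => rfl
  | succ N hN ih =>
    have hlast : p.parts N = 0 := (p.parts_eq_zero_iff N).2 hN
    have hrow (j : Fin N) : hpolyRow c (N + 1) ((p.parts N : ℤ) - N) j.castSucc = 0 :=
      hpolyZ_of_neg c (by simp [hlast])
    have hdiag : hpolyRow c (N + 1) ((p.parts N : ℤ) - N) (Fin.last N) = 1 := by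
      simp [hpolyRow, hlast, hpolyZ_zero]
    rw [← ih, Matrix.det_succ_row _ (Fin.last N), Fin.sum_univ_castSucc]
    simp only [Matrix.of_apply, Fin.val_last, hrow, hdiag, mul_zero, zero_mul, sum_const_zero,
      zero_add, (Even.add_self N).neg_one_pow, one_mul, Fin.succAbove_last]
    rfl

theorem det_esymm_eq_sum_schur_general {m n : ℕ} (c : Fin m → R) :
    Matrix.det (Matrix.of fun k l : Fin n =>
        epolyZ c ((k : ℤ) - (l : ℕ)) + (-1 : R) ^ (l : ℕ) * epoly c ((k : ℕ) + (l : ℕ) + 2)) =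
      ∑ᶠ (α : Partn) (_ : α.InA ∧ α.len ≤ n + 1), schur c α := by
  simp only [← Partn.mem_finsetA, finsum_mem_finset_eq_sum]
  rw [det_epoly_eq_det_foldedVec]
  calc
    _ = ∑ α ∈ Partn.finsetA n,
          (Matrix.of fun i : Fin (n + 1) => hpolyRow c (n + 1) ((α.parts i : ℤ) - i)).det :=
      alternatingMap_foldedVec (hpolyRow c (n + 1)) Matrix.detRowAlternating
    _ = ∑ α ∈ Partn.finsetA n, schur c α :=
      sum_congr rfl fun α hα => det_hpolyRow_eq_schur c α (Partn.mem_finsetA.1 hα).2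

end JacobiTrudi

/-- `det( e_{k-ℓ}(c) + (-1)^{ℓ-1} e_{k+ℓ}(c) ) = Σ_{α ∈ 𝒜, ℓ(α) ≤ n+1} s_α(c)`,
the sum over partitions with Frobenius leg lengths exceeding arm lengths by 1, of length
at most `n+1`.  Rows/columns are 0-indexed (`k, ℓ : Fin n` with 1-indexed values `k+1, ℓ+1`). -/
theorem det_esymm_eq_sum_schur {R : Type*} [CommRing R] {n : ℕ} (hn : 1 ≤ n)
    (c : Fin (n + 1) → R) :
    Matrix.det (Matrix.of fun k l : Fin n =>
        epolyZ c ((k : ℤ) - (l : ℕ)) + (-1 : R) ^ (l : ℕ) * epoly c ((k : ℕ) + (l : ℕ) + 2)) =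
      ∑ᶠ (α : Partn) (_ : α.InA ∧ α.len ≤ n + 1), schur c α := 
  det_esymm_eq_sum_schur_general c
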